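/- arXiv:1510.02033 — 3 statements merged into one kernel-verified Lean document; each statement's English description precedes it below -/
import Mathlib

section
/- Let q₀ : ℝ → ℂ, let c ∈ ℝ and let j ∈ ℕ. Suppose that q₀ is (j+1)-times continuously differentiable on (−∞, c) and on (c, ∞); that for every m with 0 ≤ m ≤ j+1 the restriction of the m-th derivative q₀⁽ᵐ⁾ to each of (−∞, c) and (c, ∞) is integrable; that for every m with 0 ≤ m ≤ j the one-sided limits q₀⁽ᵐ⁾(c⁻) and q₀⁽ᵐ⁾(c⁺) exist and q₀⁽ᵐ⁾(x) → 0 as x → ±∞; and that q₀⁽ᵐ⁾(c⁻) = q₀⁽ᵐ⁾(c⁺) for every m with 0 ≤ m ≤ j−1. Then for every real k ≠ 0, the Fourier transform satisfies q̂₀(k) = e^{−ikc}·[q₀⁽ʲ⁾(c)]/(ik)^{j+1} + F(k)/(ik)^{j+1}, where [q₀⁽ʲ⁾(c)] = q₀⁽ʲ⁾(c⁺) − q₀⁽ʲ⁾(c⁻) and F(k) = ∫_{−∞}^{c} e^{−ikx} q₀⁽ʲ⁺¹⁾(x) dx + ∫_{c}^{∞} e^{−ikx} q₀⁽ʲ⁺¹⁾(x)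 dx. -/
open MeasureTheory Complex Set Filter Topology

/-! Since `f` and `f'` are integrable, so are `g(x) = e^{-ikx} f(x)` and
`g'(x) = e^{-ikx} f'(x) - ik e^{-ikx} f(x)`, and `g` therefore vanishes at `±∞`. The fundamental
theorem of calculus on the two half-lines gives `∫ g' = -[g(c)] = -e^{-ikc} [f(c)]`: each
integration by parts divides by `ik` and leaves the jump of the function at `c`. Iterating `j + 1`
times gives an expansion in the jumps of all derivatives of order at most `j`, of which only the
last can be nonzero. -/

section SplitAtPoint

variable {α E : Type*} [LinearOrder α] [MeasurableSpace α] {μ : Measure α}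
  [NullSingletonClass μ] [NormedAddCommGroup E] {f : α → E}

theorem integrable_iff_integrableOn_Iio_Ioi (c : α) :
    Integrable f μ ↔ IntegrableOn f (Iio c) μ ∧ IntegrableOn f (Ioi c) μ := by
  rw [← integrableOn_union, Iio_union_Ioi, IntegrableOn, restrict_compl_singleton]

theorem integral_eq_integral_Iio_add_integral_Ioi [TopologicalSpace α] [ClosedIicTopology α]
    [OpensMeasurableSpace α] [NormedSpace ℝ E] (hf : Integrable f μ) (c : α) :
    ∫ x, f x ∂μ = (∫ x in Iio c, f x ∂μ) + ∫ x in Ioi c, f x ∂μ := by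
  rw [← setIntegral_union Iio_disjoint_Ioi_same measurableSet_Ioi hf.integrableOn
    hf.integrableOn, Iio_union_Ioi, restrict_compl_singleton]

end SplitAtPoint

section JumpFTC

variable {E : Type*} [NormedAddCommGroup E] [NormedSpace ℝ E] {f f' : ℝ → E} {c : ℝ} {L R m : E}

theorem hasDerivAt_update_of_ne {x : ℝ} {y' : E} (hf : HasDerivAt f y' x) (hx : x ≠ c) (y : E) :
    HasDerivAt (Function.update f c y) y' x :=
  hf.congr_of_eventuallyEq <| (Function.update_eventuallyEq f c y).filter_mono <|
    le_principal_iff.mpr (eventually_ne_nhds hx)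

theorem integral_Ioi_of_hasDerivAt_of_tendsto_nhdsGT [CompleteSpace E]
    (hderiv : ∀ x ∈ Ioi c, HasDerivAt f (f' x) x) (hf' : IntegrableOn f' (Ioi c))
    (hc : Tendsto f (𝓝[>] c) (𝓝 R)) (hm : Tendsto f atTop (𝓝 m)) :
    ∫ x in Ioi c, f' x = m - R := by
  simpa only [Function.update_self] using integral_Ioi_of_hasDerivAt_of_tendsto
    (continuousWithinAt_update_same.mpr (by rwa [Ici_sdiff_left]))
    (fun x hx => hasDerivAt_update_of_ne (hderiv x hx) (ne_of_gt hx) R) hf'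
    (hm.congr' ((Function.update_eventuallyEq_cofinite f c R).filter_mono atTop_le_cofinite).symm)

theorem integral_Iio_of_hasDerivAt_of_tendsto_nhdsLT [CompleteSpace E]
    (hderiv : ∀ x ∈ Iio c, HasDerivAt f (f' x) x) (hf' : IntegrableOn f' (Iio c))
    (hc : Tendsto f (𝓝[<] c) (𝓝 L)) (hm : Tendsto f atBot (𝓝 m)) :
    ∫ x in Iio c, f' x = L - m := by
  rw [← integral_Iic_eq_integral_Iio]
  simpa only [Function.update_self] using integral_Iic_of_hasDerivAt_of_tendsto
    (continuousWithinAt_update_same.mpr (by rwa [Iic_sdiff_right]))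
    (fun x hx => hasDerivAt_update_of_ne (hderiv x hx) (ne_of_lt hx) L)
    (by rwa [integrableOn_Iic_iff_integrableOn_Iio])
    (hm.congr' ((Function.update_eventuallyEq_cofinite f c L).filter_mono atBot_le_cofinite).symm)

theorem integral_deriv_eq_neg_jump [CompleteSpace E]
    (hderiv : ∀ x ≠ c, HasDerivAt f (f' x) x) (hf : Integrable f) (hf' : Integrable f')
    (hL : Tendsto f (𝓝[<] c) (𝓝 L)) (hR : Tendsto f (𝓝[>] c) (𝓝 R)) :
    ∫ x, f' x = -(R - L) := by
  have h_top : Tendsto f atTop (𝓝 0) := tendsto_zero_of_hasDerivAt_of_integrableOn_Ioi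
    (fun x hx => hderiv x (ne_of_gt hx)) hf'.integrableOn hf.integrableOn
  have h_bot : Tendsto f atBot (𝓝 0) := tendsto_zero_of_hasDerivAt_of_integrableOn_Iic
    (fun x hx => hderiv x (ne_of_lt (lt_of_le_of_lt hx (sub_one_lt c))))
    hf'.integrableOn hf.integrableOn
  rw [integral_eq_integral_Iio_add_integral_Ioi hf' c,
    integral_Iio_of_hasDerivAt_of_tendsto_nhdsLT (fun x hx => hderiv x (ne_of_lt hx))
      hf'.integrableOn hL h_bot,
    integral_Ioi_of_hasDerivAt_of_tendsto_nhdsGT (fun x hx => hderiv x (ne_of_gt hx))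
      hf'.integrableOn hR h_top]
  abel

end JumpFTC

section FourierJump

variable {E : Type*} [NormedAddCommGroup E] [NormedSpace ℂ E]

theorem norm_exp_neg_I_mul_mul (k x : ℝ) : ‖exp (-I * k * x)‖ = 1 := by
  simpa [mul_assoc] using norm_exp_I_mul_ofReal (-(k * x))

theorem hasDerivAt_exp_neg_I_mul_mul (k x : ℝ) :
    HasDerivAt (fun y : ℝ => exp (-I * k * y)) (-(I * k) * exp (-I * k * x)) x := by
  simpa [mul_comm] using ((ofRealCLM.hasDerivAt (x := x)).const_mul (-I * (k : ℂ))).cexp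

theorem integrable_exp_neg_I_mul_mul_smul {μ : Measure ℝ} {f : ℝ → E} (hf : Integrable f μ)
    (k : ℝ) : Integrable (fun x : ℝ => exp (-I * k * x) • f x) μ :=
  hf.bdd_smul 1 (by fun_prop) (Eventually.of_forall fun x => (norm_exp_neg_I_mul_mul k x).le)

variable [CompleteSpace E]

theorem integral_exp_smul_deriv_eq_sub_jump {f f' : ℝ → E} {c : ℝ} {L R : E} (k : ℝ)
    (hderiv : ∀ x ≠ c, HasDerivAt f (f' x) x) (hf : Integrable f) (hf' : Integrable f')
    (hL : Tendsto f (𝓝[<] c) (𝓝 L)) (hR : Tendsto f (𝓝[>] c) (𝓝 R)) :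
    ∫ x : ℝ, exp (-I * k * x) • f' x
      = (I * k) • (∫ x : ℝ, exp (-I * k * x) • f x) - exp (-I * k * c) • (R - L) := by
  have hef := integrable_exp_neg_I_mul_mul_smul hf k
  have hef' := integrable_exp_neg_I_mul_mul_smul hf' k
  have h_exp : Tendsto (fun x : ℝ => exp (-I * k * x)) (𝓝 c) (𝓝 (exp (-I * k * c))) :=
    (hasDerivAt_exp_neg_I_mul_mul k c).continuousAt
  have h_deriv : ∀ x ≠ c, HasDerivAt (fun x : ℝ => exp (-I * k * x) • f x)
      (exp (-I * k * x) • f' x - (I * k) • exp (-I * k * x) • f x) x := fun x hx =>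
    ((hasDerivAt_exp_neg_I_mul_mul k x).smul (hderiv x hx)).congr_deriv (by module)
  have h_jump := integral_deriv_eq_neg_jump h_deriv hef (hef'.sub (hef.fun_smul (I * (k : ℂ))))
    ((h_exp.mono_left nhdsWithin_le_nhds).smul hL) ((h_exp.mono_left nhdsWithin_le_nhds).smul hR)
  rw [integral_sub hef' (hef.fun_smul _), integral_smul, ← smul_sub] at h_jump
  rw [sub_eq_iff_eq_add.mp h_jump]
  abel

theorem integral_exp_smul_eq_sum_jumps_add {c : ℝ} {n : ℕ} {d : ℕ → ℝ → E} {L R : ℕ → E}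
    (hderiv : ∀ m < n, ∀ x ≠ c, HasDerivAt (d m) (d (m + 1) x) x)
    (hint : ∀ m ≤ n, Integrable (d m))
    (hL : ∀ m < n, Tendsto (d m) (𝓝[<] c) (𝓝 (L m)))
    (hR : ∀ m < n, Tendsto (d m) (𝓝[>] c) (𝓝 (R m))) {k : ℝ} (hk : k ≠ 0) :
    ∫ x : ℝ, exp (-I * k * x) • d 0 x
      = ∑ m ∈ Finset.range n, ((I * k) ^ (m + 1))⁻¹ • exp (-I * k * c) • (R m - L m)
        + ((I * k) ^ n)⁻¹ • ∫ x : ℝ, exp (-I * k * x) • d n x := by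
  have hik : I * (k : ℂ) ≠ 0 := mul_ne_zero I_ne_zero (ofReal_ne_zero.mpr hk)
  induction n with
  | zero => simp
  | succ n ih =>
    have h_parts := integral_exp_smul_deriv_eq_sub_jump k (hderiv n n.lt_succ_self)
      (hint n n.le_succ) (hint (n + 1) le_rfl) (hL n n.lt_succ_self) (hR n n.lt_succ_self)
    have h_cancel : ((I * (k : ℂ)) ^ (n + 1))⁻¹ * (I * k) = ((I * k) ^ n)⁻¹ := by
      rw [pow_succ, mul_inv, inv_mul_cancel_right₀ hik]
    rw [ih (fun m hm => hderiv m (by omega)) (fun m hm => hint m (by omega))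
      (fun m hm => hL m (by omega)) (fun m hm => hR m (by omega)), Finset.sum_range_succ, h_parts,
      smul_sub _ (_ • ∫ x, _), smul_smul _ (I * (k : ℂ)), h_cancel]
    abel

theorem fourier_transform_jump_decomposition_general
    (q₀ : ℝ → E) (c : ℝ) (j : ℕ) (d : ℕ → ℝ → E) (Lm Lp : ℕ → E)
    (hd0 : d 0 = q₀)
    (hderiv : ∀ m ≤ j, ∀ x ∈ Iio c ∪ Ioi c, HasDerivAt (d m) (d (m + 1) x) x)
    (hint : ∀ m ≤ j + 1, IntegrableOn (d m) (Iio c) ∧ IntegrableOn (d m) (Ioi c))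
    (hlimL : ∀ m ≤ j, Tendsto (d m) (𝓝[<] c) (𝓝 (Lm m)))
    (hlimR : ∀ m ≤ j, Tendsto (d m) (𝓝[>] c) (𝓝 (Lp m)))
    (hmatch : ∀ m < j, Lm m = Lp m) (k : ℝ) (hk : k ≠ 0) :
    ∫ x : ℝ, exp (-I * k * x) • q₀ x
      = ((I * k) ^ (j + 1))⁻¹ • exp (-I * k * c) • (Lp j - Lm j)
        + ((I * k) ^ (j + 1))⁻¹ • ((∫ x in Iio c, exp (-I * k * x) • d (j + 1) x)
          + ∫ x in Ioi c, exp (-I * k * x) • d (j + 1) x) := by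
  subst hd0
  have h_int : ∀ m ≤ j + 1, Integrable (d m) := fun m hm =>
    (integrable_iff_integrableOn_Iio_Ioi c).mpr (hint m hm)
  have h_sum : ∑ m ∈ Finset.range (j + 1),
      ((I * (k : ℂ)) ^ (m + 1))⁻¹ • exp (-I * k * c) • (Lp m - Lm m)
        = ((I * k) ^ (j + 1))⁻¹ • exp (-I * k * c) • (Lp j - Lm j) := by
    rw [Finset.sum_range_succ, add_eq_right]
    refine Finset.sum_eq_zero fun m hm => ?_
    rw [hmatch m (Finset.mem_range.mp hm), sub_self, smul_zero, smul_zero]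
  rw [integral_exp_smul_eq_sum_jumps_add (n := j + 1) (c := c)
      (fun m hm x hx => hderiv m (by omega) x (lt_or_gt_of_ne hx)) h_int
      (fun m hm => hlimL m (by omega)) (fun m hm => hlimR m (by omega)) hk,
    h_sum, integral_eq_integral_Iio_add_integral_Ioi
      (integrable_exp_neg_I_mul_mul_smul (h_int (j + 1) le_rfl) k) c]

end FourierJump

/-- Integration by parts formula for the Fourier transform of a function
whose `j`-th derivative has a jump discontinuity at `x = c`.
Here `d m` denotes the `m`-th derivative of `q₀` (with `d 0 = q₀`), `Lm m` and `Lp m`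
denote the one-sided limits `q₀⁽ᵐ⁾(c⁻)` and `q₀⁽ᵐ⁾(c⁺)` respectively. -/
theorem fourier_transform_jump_decomposition
    (q₀ : ℝ → ℂ) (c : ℝ) (j : ℕ)
    (d : ℕ → ℝ → ℂ) (Lm Lp : ℕ → ℂ)
    (hd0 : d 0 = q₀)
    -- q₀ is (j+1)-times differentiable on (−∞,c) and (c,∞),
    -- with m-th derivative d m:
    (hderiv : ∀ m ≤ j, ∀ x ∈ Iio c ∪ Ioi c, HasDerivAt (d m) (d (m + 1) x) x)
    -- all derivatives up to order j+1 are continuous on (−∞,c) and (c,∞):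
    (hcont : ∀ m ≤ j + 1, ContinuousOn (d m) (Iio c) ∧ ContinuousOn (d m) (Ioi c))
    -- all derivatives up to order j+1 are integrable on (−∞,c) and (c,∞):
    (hint : ∀ m ≤ j + 1, IntegrableOn (d m) (Iio c) ∧ IntegrableOn (d m) (Ioi c))
    -- one-sided limits at c exist for derivatives up to order j:
    (hlimL : ∀ m ≤ j, Tendsto (d m) (nhdsWithin c (Iio c)) (nhds (Lm m)))
    (hlimR : ∀ m ≤ j, Tendsto (d m) (nhdsWithin c (Ioi c)) (nhds (Lp m)))
    -- derivatives up to order j vanish at ±∞: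
    (hdecay : ∀ m ≤ j, Tendsto (d m) atTop (nhds 0) ∧ Tendsto (d m) atBot (nhds 0))
    -- continuity across c of the derivatives of order ≤ j−1:
    (hmatch : ∀ m, m + 1 ≤ j → Lm m = Lp m) :
    ∀ k : ℝ, k ≠ 0 →
      (∫ x : ℝ, Complex.exp (-Complex.I * k * x) * q₀ x)
        = Complex.exp (-Complex.I * k * c) * (Lp j - Lm j) / (Complex.I * k) ^ (j + 1)
          + ((∫ x in Iio c, Complex.exp (-Complex.I * k * x) * d (j + 1) x)
              + ∫ x in Ioi c, Complex.exp (-Complex.I * k * x) * d (j + 1) x)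
            / (Complex.I * k) ^ (j + 1) := by
  intro k hk
  simpa only [smul_eq_mul, inv_mul_eq_div] using fourier_transform_jump_decomposition_general
    q₀ c j d Lm Lp hd0 hderiv hint hlimL hlimR hmatch k hk
end

section
/- Let h : ℝ → ℂ be integrable and of bounded variation on ℝ, and let t ∈ ℝ be a point at which the one-sided limits h(t⁺) and h(t⁻) exist. Define ĥ(s) = ∫_ℝ e^{−isτ} h(τ) dτ. Then the symmetric (principal-value) Fourier inversion integral converges to the average of the one-sided limits: lim_{R→∞} (1/2π) ∫_{−R}^{R} e^{ist} ĥ(s) ds = (h(t⁺) + h(t⁻))/2. -/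
open MeasureTheory Complex Set Filter Topology

/-!
Write `Si` for the sine integral. Fubini's theorem and integration by parts against the Stieltjes
measure `dh` give
`(1/2π) ∫_{-R}^R e^{ist} ĥ(s) ds = (1/π) ∫ h(τ) R sinc(R(τ - t)) dτ = -(1/π) ∫ Si(R(v - t)) dh(v)`,
the boundary terms vanishing because `h` tends to `0` at `±∞`. As `Si` is bounded and
`Si(Rx) → (π/2) sign x`, dominated convergence sends the right-hand side to
`(dh(-∞, t) - dh(t, ∞)) / 2 = (h(t⁻) + h(t⁺)) / 2`; an atom of `dh` at `t` does not contribute,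
since `Si 0 = 0`.
-/

/-- The sine integral `Si`, the antiderivative of `sinc` vanishing at `0`. -/
noncomputable def sineIntegral (x : ℝ) : ℝ := ∫ u in (0 : ℝ)..x, Real.sinc u

theorem hasDerivAt_sineIntegral (x : ℝ) : HasDerivAt sineIntegral (Real.sinc x) x :=
  Real.continuous_sinc.integral_hasStrictDerivAt 0 x |>.hasDerivAt

theorem continuous_sineIntegral : Continuous sineIntegral :=
  continuous_iff_continuousAt.2 fun x => (hasDerivAt_sineIntegral x).continuousAt

theorem sineIntegral_zero : sineIntegral 0 = 0 := intervalIntegral.integral_same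

theorem sineIntegral_neg (x : ℝ) : sineIntegral (-x) = -sineIntegral x := by
  have h := intervalIntegral.integral_comp_neg (a := 0) (b := x) Real.sinc
  simp only [Real.sinc_neg, neg_zero] at h
  rw [sineIntegral, sineIntegral, h, intervalIntegral.integral_symm]

theorem abs_sineIntegral_le_abs (x : ℝ) : |sineIntegral x| ≤ |x| := by
  simpa [sineIntegral] using intervalIntegral.norm_integral_le_of_norm_le_const (a := 0) (b := x)
    (f := Real.sinc) (C := 1) fun u _ => Real.abs_sinc_le_one u

theorem integrableOn_exp_neg_mul_Ioi {x : ℝ} (hx : 0 < x) :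
    IntegrableOn (fun y => Real.exp (-(x * y))) (Ioi 0) := by
  simpa only [neg_mul] using integrableOn_exp_mul_Ioi (neg_neg_of_pos hx) 0

theorem integral_exp_neg_mul_Ioi {x : ℝ} (hx : 0 < x) :
    ∫ y in Ioi (0 : ℝ), Real.exp (-(x * y)) = x⁻¹ := by
  simpa [neg_mul] using integral_exp_mul_Ioi (neg_neg_of_pos hx) 0

theorem integral_sin_mul_exp_neg_mul (R y : ℝ) :
    ∫ x in (0 : ℝ)..R, Real.sin x * Real.exp (-(x * y)) =
      (1 - Real.exp (-(R * y)) * (y * Real.sin R + Real.cos R)) * (1 + y ^ 2)⁻¹ := by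
  have hderiv (x : ℝ) : HasDerivAt
      (fun x => -(Real.exp (-(x * y)) * (y * Real.sin x + Real.cos x)) * (1 + y ^ 2)⁻¹)
      (Real.sin x * Real.exp (-(x * y))) x := by
    have hexp : HasDerivAt (fun x : ℝ => Real.exp (-(x * y)))
        (Real.exp (-(x * y)) * -(1 * y)) x := ((hasDerivAt_id x).mul_const y).fun_neg.exp
    have htrig : HasDerivAt (fun x : ℝ => y * Real.sin x + Real.cos x)
        (y * Real.cos x + -Real.sin x) x :=
      ((Real.hasDerivAt_sin x).const_mul y).fun_add (Real.hasDerivAt_cos x)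
    refine ((hexp.fun_mul htrig).fun_neg.mul_const (1 + y ^ 2)⁻¹).congr_deriv ?_
    have : 1 + y ^ 2 ≠ 0 := by positivity
    field_simp
    ring
  rw [intervalIntegral.integral_eq_sub_of_hasDerivAt (fun x _ => hderiv x)
    (Continuous.intervalIntegrable (by fun_prop) _ _)]
  simp only [zero_mul, neg_zero, Real.exp_zero, Real.sin_zero, Real.cos_zero]
  ring

theorem integral_sin_mul_exp_neg_mul_Ioi {x : ℝ} (hx : 0 < x) :
    ∫ y in Ioi (0 : ℝ), Real.sin x * Real.exp (-(x * y)) = Real.sinc x := by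
  rw [integral_const_mul, integral_exp_neg_mul_Ioi hx, Real.sinc_of_ne_zero hx.ne', div_eq_mul_inv]

theorem integrable_prod_sin_mul_exp_neg_mul (R : ℝ) :
    Integrable (fun p : ℝ × ℝ => Real.sin p.1 * Real.exp (-(p.1 * p.2)))
      ((volume.restrict (Ioc 0 R)).prod (volume.restrict (Ioi 0))) := by
  rw [integrable_prod_iff (Continuous.aestronglyMeasurable (by fun_prop))]
  constructor
  · filter_upwards [ae_restrict_mem measurableSet_Ioc] with x hx
    exact (integrableOn_exp_neg_mul_Ioi hx.1).const_mul (Real.sin x)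
  · have hsinc : IntegrableOn (fun x => |Real.sinc x|) (Ioc 0 R) :=
      Real.continuous_sinc.abs.integrableOn_Ioc
    refine hsinc.congr_fun (fun x hx => ?_) measurableSet_Ioc
    simp only [norm_mul, Real.norm_eq_abs, Real.abs_exp]
    rw [integral_const_mul, integral_exp_neg_mul_Ioi hx.1, Real.sinc_of_ne_zero hx.1.ne',
      abs_div, abs_of_pos hx.1, div_eq_mul_inv]

theorem sineIntegral_eq_integral_Ioi {R : ℝ} (hR : 0 ≤ R) :
    sineIntegral R = ∫ y in Ioi (0 : ℝ),
      (1 - Real.exp (-(R * y)) * (y * Real.sin R + Real.cos R)) * (1 + y ^ 2)⁻¹ := by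
  calc sineIntegral R
      = ∫ x in (0 : ℝ)..R, ∫ y in Ioi (0 : ℝ), Real.sin x * Real.exp (-(x * y)) := by
        refine intervalIntegral.integral_congr_ae (Eventually.of_forall fun x hx => ?_)
        rw [uIoc_of_le hR] at hx
        exact (integral_sin_mul_exp_neg_mul_Ioi hx.1).symm
    _ = ∫ y in Ioi (0 : ℝ), ∫ x in (0 : ℝ)..R, Real.sin x * Real.exp (-(x * y)) := by
        refine intervalIntegral_integral_swap ?_
        rw [uIoc_of_le hR]
        exact integrable_prod_sin_mul_exp_neg_mul R
    _ = _ := by simp_rw [integral_sin_mul_exp_neg_mul]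

theorem abs_sineIntegral_sub_pi_div_two_le {R : ℝ} (hR : 0 < R) :
    |sineIntegral R - Real.pi / 2| ≤ 2 / R := by
  have hbound {y : ℝ} (hy : 0 < y) :
      |-(Real.exp (-(R * y)) * (y * Real.sin R + Real.cos R) * (1 + y ^ 2)⁻¹)| ≤
        2 * Real.exp (-(R * y)) := by
    have htrig : |y * Real.sin R + Real.cos R| ≤ 2 * (1 + y ^ 2) := by
      refine abs_le.2 ⟨?_, ?_⟩ <;>
        nlinarith [Real.sin_le_one R, Real.neg_one_le_sin R, Real.cos_le_one R,
          Real.neg_one_le_cos R, sq_nonneg (y - 1)]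
    have hpos : 0 < 1 + y ^ 2 := by positivity
    rw [abs_neg, abs_mul, abs_mul, Real.abs_exp, abs_of_pos (inv_pos.2 hpos), mul_assoc,
      mul_comm 2]
    gcongr
    exact (mul_inv_le_iff₀ hpos).2 htrig
  have hexp : IntegrableOn (fun y => 2 * Real.exp (-(R * y))) (Ioi 0) :=
    (integrableOn_exp_neg_mul_Ioi hR).const_mul 2
  have hbound_ae : ∀ᵐ y ∂volume.restrict (Ioi 0),
      ‖-(Real.exp (-(R * y)) * (y * Real.sin R + Real.cos R) * (1 + y ^ 2)⁻¹)‖ ≤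
        2 * Real.exp (-(R * y)) :=
    (ae_restrict_mem measurableSet_Ioi).mono fun y hy => hbound hy
  have hrem : sineIntegral R - Real.pi / 2 = ∫ y in Ioi (0 : ℝ),
      -(Real.exp (-(R * y)) * (y * Real.sin R + Real.cos R) * (1 + y ^ 2)⁻¹) := by
    have hpi : Real.pi / 2 = ∫ y in Ioi (0 : ℝ), (1 + y ^ 2)⁻¹ := by
      rw [integral_Ioi_inv_one_add_sq, Real.arctan_zero, sub_zero]
    have hinv : IntegrableOn (fun y : ℝ => (1 + y ^ 2)⁻¹) (Ioi 0) :=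
      integrable_inv_one_add_sq.integrableOn
    rw [sineIntegral_eq_integral_Ioi hR.le, sub_eq_iff_eq_add', hpi, ← integral_add hinv
      (hexp.mono' (Measurable.aestronglyMeasurable (by fun_prop)) hbound_ae)]
    congr with y
    ring
  rw [hrem, div_eq_mul_inv, ← integral_exp_neg_mul_Ioi hR, ← integral_const_mul]
  exact norm_integral_le_of_norm_le hexp hbound_ae

theorem tendsto_sineIntegral_atTop : Tendsto sineIntegral atTop (𝓝 (Real.pi / 2)) := by
  have hbound : Tendsto (fun R : ℝ => 2 / R) atTop (𝓝 0) :=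
    tendsto_const_nhds.div_atTop tendsto_id
  refine tendsto_iff_dist_tendsto_zero.2 <|
    squeeze_zero' (Eventually.of_forall fun _ => dist_nonneg) ?_ hbound
  filter_upwards [eventually_gt_atTop 0] with R hR using abs_sineIntegral_sub_pi_div_two_le hR

theorem abs_sineIntegral_le (x : ℝ) : |sineIntegral x| ≤ 4 := by
  wlog hx : 0 ≤ x generalizing x
  · simpa only [sineIntegral_neg, abs_neg] using this (-x) (by linarith)
  rcases le_total x 1 with hx1 | hx1
  · linarith [abs_sineIntegral_le_abs x, abs_of_nonneg hx]
  · have hdist := abs_le.1 (abs_sineIntegral_sub_pi_div_two_le (hx.lt_of_ne (by linarith)))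
    have htwo : 2 / x ≤ 2 := div_le_self two_pos.le hx1
    exact abs_le.2 ⟨by linarith [Real.pi_pos], by linarith [Real.pi_le_four]⟩

theorem tendsto_sineIntegral_mul_atTop (x : ℝ) :
    Tendsto (fun R => sineIntegral (R * x)) atTop (𝓝 (Real.pi / 2 * Real.sign x)) := by
  have hpos {y : ℝ} (hy : 0 < y) :
      Tendsto (fun R => sineIntegral (R * y)) atTop (𝓝 (Real.pi / 2)) :=
    tendsto_sineIntegral_atTop.comp (tendsto_id.atTop_mul_const hy)
  rcases lt_trichotomy x 0 with hx | rfl | hx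
  · simpa [sineIntegral_neg, Real.sign_of_neg hx] using (hpos (neg_pos.2 hx)).neg
  · simp [sineIntegral_zero]
  · simpa [Real.sign_of_pos hx] using hpos hx

theorem withDensityᵥ_complexMeasure_rnDeriv_eq {α : Type*} [MeasurableSpace α]
    {c : ComplexMeasure α} {μ : Measure α} [SigmaFinite μ] (hc : c ≪ᵥ μ.toENNRealVectorMeasure) :
    μ.withDensityᵥ (c.rnDeriv μ) = c := by
  obtain ⟨hre, him⟩ := (c.absolutelyContinuous_ennreal_iff _).1 hc
  have hint := c.integrable_rnDeriv μ
  ext i hi : 1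
  apply Complex.ext
  · calc (μ.withDensityᵥ (c.rnDeriv μ) i).re
        = ∫ x in i, (ComplexMeasure.re c).rnDeriv μ x ∂μ := by
          rw [withDensityᵥ_apply hint hi]
          exact (integral_re hint.integrableOn).symm
      _ = (c i).re := by
          rw [← withDensityᵥ_apply (SignedMeasure.integrable_rnDeriv _ _) hi,
            SignedMeasure.withDensityᵥ_rnDeriv_eq _ _ hre]
          rfl
  · calc (μ.withDensityᵥ (c.rnDeriv μ) i).im
        = ∫ x in i, (ComplexMeasure.im c).rnDeriv μ x ∂μ := by
          rw [withDensityᵥ_apply hint hi]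
          exact (integral_im hint.integrableOn).symm
      _ = (c i).im := by
          rw [← withDensityᵥ_apply (SignedMeasure.integrable_rnDeriv _ _) hi,
            SignedMeasure.withDensityᵥ_rnDeriv_eq _ _ him]
          rfl

theorem exists_isFiniteMeasure_withDensityᵥ_eq {α : Type*} [MeasurableSpace α]
    (c : ComplexMeasure α) :
    ∃ ν : Measure α, IsFiniteMeasure ν ∧ ∃ ρ : α → ℂ, Integrable ρ ν ∧ ν.withDensityᵥ ρ = c := by
  let ν := (ComplexMeasure.re c).totalVariation + (ComplexMeasure.im c).totalVariation
  have hc : c ≪ᵥ ν.toENNRealVectorMeasure := by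
    simp only [ComplexMeasure.absolutelyContinuous_ennreal_iff,
      SignedMeasure.absolutelyContinuous_ennreal_iff,
      VectorMeasure.ennrealToMeasure_toENNRealVectorMeasure]
    exact ⟨Measure.AbsolutelyContinuous.rfl.add_right _,
      (Measure.le_add_left le_rfl).absolutelyContinuous⟩
  exact ⟨ν, inferInstance, c.rnDeriv ν, c.integrable_rnDeriv ν,
    withDensityᵥ_complexMeasure_rnDeriv_eq hc⟩

theorem rightLim_ae_eq_of_locallyBoundedVariationOn {V : Type*} [NormedAddCommGroup V]
    [NormedSpace ℝ V] [FiniteDimensional ℝ V] {f : ℝ → V} (hf : LocallyBoundedVariationOn f univ) :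
    Function.rightLim f =ᵐ[volume] f := by
  filter_upwards [hf.ae_differentiableAt] with x hx
  exact hx.continuousAt.continuousWithinAt.rightLim_eq

section Limits

variable {E : Type*} [NormedAddCommGroup E] [CompleteSpace E] {f : ℝ → E}

theorem tendsto_atTop_zero_of_integrable_of_boundedVariationOn (hint : Integrable f)
    (hf : BoundedVariationOn f univ) : Tendsto f atTop (𝓝 0) := by
  have hlim := hf.tendsto_atTop_limUnder
  have htop (s : Set ℝ) (hs : s ∈ atTop) : volume s = ⊤ := by
    obtain ⟨x, hx⟩ := mem_atTop_sets.1 hs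
    exact measure_mono_top (fun y hy => hx y hy) Real.volume_Ici
  rwa [(hint.integrableAtFilter _).eq_zero_of_tendsto htop hlim] at hlim

theorem tendsto_atBot_zero_of_integrable_of_boundedVariationOn (hint : Integrable f)
    (hf : BoundedVariationOn f univ) : Tendsto f atBot (𝓝 0) := by
  have hlim := hf.tendsto_atBot_limUnder
  have htop (s : Set ℝ) (hs : s ∈ atBot) : volume s = ⊤ := by
    obtain ⟨x, hx⟩ := mem_atBot_sets.1 hs
    exact measure_mono_top (fun y hy => hx y hy) Real.volume_Iic
  rwa [(hint.integrableAtFilter _).eq_zero_of_tendsto htop hlim] at hlim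

end Limits

/-- The complex Stieltjes measure `df` appears as a density `ρ` against a positive measure `ν`, so
that Fubini's theorem for positive measures applies to it. -/
theorem exists_leftLim_rightLim_eq_setIntegral {f : ℝ → ℂ} (hint : Integrable f)
    (hf : BoundedVariationOn f univ) :
    ∃ ν : Measure ℝ, IsFiniteMeasure ν ∧ ∃ ρ : ℝ → ℂ, Integrable ρ ν ∧ ∫ v, ρ v ∂ν = 0 ∧
      (∀ x, Function.leftLim f x = ∫ v in Iio x, ρ v ∂ν) ∧
      ∀ x, Function.rightLim f x = -∫ v in Ioi x, ρ v ∂ν := by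
  obtain ⟨ν, hν, ρ, hρ, hdf⟩ := exists_isFiniteMeasure_withDensityᵥ_eq hf.vectorMeasure
  have htop : limUnder atTop f = 0 :=
    (tendsto_atTop_zero_of_integrable_of_boundedVariationOn hint hf).limUnder_eq
  have hbot : limUnder atBot f = 0 :=
    (tendsto_atBot_zero_of_integrable_of_boundedVariationOn hint hf).limUnder_eq
  have happly {s : Set ℝ} (hs : MeasurableSet s) : ∫ v in s, ρ v ∂ν = hf.vectorMeasure s := by
    rw [← hdf, withDensityᵥ_apply hρ hs]
  refine ⟨ν, hν, ρ, hρ, ?_, fun x => ?_, fun x => ?_⟩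
  · rw [← setIntegral_univ, happly .univ, hf.vectorMeasure_univ, htop, hbot, sub_zero]
  · rw [happly measurableSet_Iio, hf.vectorMeasure_Iio, hbot, sub_zero]
  · rw [happly measurableSet_Ioi, hf.vectorMeasure_Ioi, htop, zero_sub, neg_neg]

section Stieltjes

variable {E : Type*} [NormedAddCommGroup E] [NormedSpace ℝ E] {ν : Measure ℝ} {ρ : ℝ → E}

theorem integral_sign_sub_smul (hρ : Integrable ρ ν) (t : ℝ) :
    ∫ v, Real.sign (v - t) • ρ v ∂ν = (∫ v in Ioi t, ρ v ∂ν) - ∫ v in Iio t, ρ v ∂ν := by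
  rw [← integral_indicator measurableSet_Ioi, ← integral_indicator measurableSet_Iio,
    ← integral_sub (hρ.indicator measurableSet_Ioi) (hρ.indicator measurableSet_Iio)]
  congr with v
  rcases lt_trichotomy v t with hv | rfl | hv
  · simp [Real.sign_of_neg (sub_neg.2 hv), hv, hv.le]
  · simp
  · simp [Real.sign_of_pos (sub_pos.2 hv), hv, hv.le]

theorem tendsto_integral_sineIntegral_smul (hρ : Integrable ρ ν) (t : ℝ) :
    Tendsto (fun R => ∫ v, sineIntegral (R * (v - t)) • ρ v ∂ν) atTop
      (𝓝 ((Real.pi / 2) • ((∫ v in Ioi t, ρ v ∂ν) - ∫ v in Iio t, ρ v ∂ν))) := by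
  rw [← integral_sign_sub_smul hρ, ← integral_smul]
  refine tendsto_integral_filter_of_dominated_convergence (fun v => 4 * ‖ρ v‖)
    (Eventually.of_forall fun R => ?_)
    (Eventually.of_forall fun R => Eventually.of_forall fun v => ?_)
    (hρ.norm.const_mul 4) (Eventually.of_forall fun v => ?_)
  · exact (continuous_sineIntegral.comp (by fun_prop)).aestronglyMeasurable.smul
      hρ.aestronglyMeasurable
  · rw [norm_smul]
    exact mul_le_mul_of_nonneg_right (abs_sineIntegral_le _) (norm_nonneg _)
  · rw [smul_smul]
    exact (tendsto_sineIntegral_mul_atTop _).smul_const _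

variable [CompleteSpace E] {φ Φ : ℝ → ℝ}

theorem intervalIntegral_indicator_Iio {a b : ℝ} (hΦ : ∀ x, HasDerivAt Φ (φ x) x)
    (hφ : Continuous φ) (hab : a ≤ b) (v : ℝ) :
    ∫ x in a..b, (Iio v).indicator φ x = Φ (max a (min b v)) - Φ a := by
  rw [← intervalIntegral.integral_eq_sub_of_hasDerivAt (fun x _ => hΦ x)
      (hφ.intervalIntegrable _ _), intervalIntegral.integral_of_le hab,
    intervalIntegral.integral_of_le (le_max_left _ _), setIntegral_indicator measurableSet_Iio]
  refine setIntegral_congr_set ?_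
  have hIoc : Ioc a (max a (min b v)) = Ioc a b ∩ Iic v := by
    ext x
    simp only [mem_Ioc, mem_inter_iff, mem_Iic]
    grind
  rw [hIoc]
  exact (ae_eq_refl _).inter Iio_ae_eq_Iic

theorem intervalIntegral_smul_setIntegral_Ioi [SFinite ν] {a b : ℝ}
    (hΦ : ∀ x, HasDerivAt Φ (φ x) x) (hφ : Continuous φ) (hρ : Integrable ρ ν) (hab : a ≤ b) :
    ∫ x in a..b, φ x • ∫ v in Ioi x, ρ v ∂ν = ∫ v, (Φ (max a (min b v)) - Φ a) • ρ v ∂ν := by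
  have hint : Integrable (fun p : ℝ × ℝ => (Iio p.2).indicator φ p.1 • ρ p.2)
      ((volume.restrict (uIoc a b)).prod ν) := by
    have hprod : Integrable (fun p : ℝ × ℝ => φ p.1 • ρ p.2)
        ((volume.restrict (uIoc a b)).prod ν) :=
      (hφ.intervalIntegrable a b).def'.smul_prod hρ
    refine (hprod.indicator (measurableSet_lt measurable_fst measurable_snd)).congr
      (Eventually.of_forall fun p => ?_)
    by_cases hp : p.1 < p.2 <;> simp [hp]
  calc ∫ x in a..b, φ x • ∫ v in Ioi x, ρ v ∂ν
      = ∫ x in a..b, ∫ v, (Iio v).indicator φ x • ρ v ∂ν := by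
        congr with x
        rw [← integral_smul, ← integral_indicator measurableSet_Ioi]
        congr with v
        by_cases hv : x < v <;> simp [hv]
    _ = ∫ v, (∫ x in a..b, (Iio v).indicator φ x) • ρ v ∂ν := by
        rw [intervalIntegral_integral_swap hint]
        simp_rw [intervalIntegral.integral_smul_const]
    _ = ∫ v, (Φ (max a (min b v)) - Φ a) • ρ v ∂ν := by
        simp_rw [intervalIntegral_indicator_Iio hΦ hφ hab]

theorem integral_smul_setIntegral_Ioi [SFinite ν] {C : ℝ} (hΦ : ∀ x, HasDerivAt Φ (φ x) x)
    (hφ : Continuous φ) (hC : ∀ x, |Φ x| ≤ C) (hρ : Integrable ρ ν) (hρ₀ : ∫ v, ρ v ∂ν = 0)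
    (hint : Integrable fun x => φ x • ∫ v in Ioi x, ρ v ∂ν) :
    ∫ x, φ x • ∫ v in Ioi x, ρ v ∂ν = ∫ v, Φ v • ρ v ∂ν := by
  have hΦc : Continuous Φ := continuous_iff_continuousAt.2 fun x => (hΦ x).continuousAt
  have hclamp (n : ℕ) : ∫ x in (-n : ℝ)..n, φ x • ∫ v in Ioi x, ρ v ∂ν =
      ∫ v, Φ (max (-n) (min n v)) • ρ v ∂ν := by
    rw [intervalIntegral_smul_setIntegral_Ioi hΦ hφ hρ (by simp)]
    simp_rw [sub_smul]
    rw [integral_sub _ (hρ.fun_smul _), integral_smul, hρ₀, smul_zero, sub_zero]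
    exact hρ.bdd_smul C (by fun_prop) (Eventually.of_forall fun v => hC _)
  refine tendsto_nhds_unique (intervalIntegral_tendsto_integral hint
    (tendsto_neg_atTop_atBot.comp tendsto_natCast_atTop_atTop) tendsto_natCast_atTop_atTop) ?_
  simp only [Function.comp_apply, hclamp]
  refine tendsto_integral_of_dominated_convergence (fun v => C * ‖ρ v‖) (fun n => ?_)
    (hρ.norm.const_mul C) (fun n => Eventually.of_forall fun v => ?_)
    (Eventually.of_forall fun v => ?_)
  · exact AEStronglyMeasurable.smul (by fun_prop) hρ.aestronglyMeasurable
  · rw [norm_smul]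
    exact mul_le_mul_of_nonneg_right (hC _) (norm_nonneg _)
  · refine tendsto_const_nhds.congr' ?_
    filter_upwards [tendsto_natCast_atTop_atTop.eventually_ge_atTop |v|] with n hn
    rw [min_eq_right (abs_le.1 hn).2, max_eq_right (abs_le.1 hn).1]

theorem integral_sinc_smul_setIntegral_Ioi [SFinite ν] (hρ : Integrable ρ ν)
    (hρ₀ : ∫ v, ρ v ∂ν = 0) (hint : Integrable fun x => ∫ v in Ioi x, ρ v ∂ν) (t R : ℝ) :
    ∫ x, (R * Real.sinc (R * (x - t))) • ∫ v in Ioi x, ρ v ∂ν =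
      ∫ v, sineIntegral (R * (v - t)) • ρ v ∂ν := by
  have hcont : Continuous fun x => R * Real.sinc (R * (x - t)) := by fun_prop
  refine integral_smul_setIntegral_Ioi (fun x => ?_) hcont (fun x => abs_sineIntegral_le _) hρ hρ₀
    (hint.bdd_smul |R| hcont.aestronglyMeasurable (Eventually.of_forall fun x => ?_))
  · have hlin : HasDerivAt (fun x => R * (x - t)) (R * 1) x :=
      ((hasDerivAt_id x).sub_const t).const_mul R
    refine ((hasDerivAt_sineIntegral _).comp x hlin).congr_deriv ?_
    ring
  · rw [norm_mul]
    exact mul_le_of_le_one_right (norm_nonneg R) (Real.abs_sinc_le_one _)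

end Stieltjes


theorem integral_exp_I_mul (R x : ℝ) :
    ∫ s in (-R)..R, cexp (I * s * x) = 2 * ((R * Real.sinc (R * x) : ℝ) : ℂ) := by
  rcases eq_or_ne x 0 with rfl | hx
  · simp [two_mul]
  · have hscale := intervalIntegral.integral_comp_mul_right (a := -R) (b := R)
      (fun s : ℝ => cexp (s * I)) hx
    rw [neg_mul, integral_exp_mul_I_eq_sinc] at hscale
    calc ∫ s in (-R)..R, cexp (I * s * x)
        = ∫ s in (-R)..R, cexp ((s * x : ℝ) * I) := by
          congr with s
          push_cast
          ring_nf
      _ = 2 * ((R * Real.sinc (R * x) : ℝ) : ℂ) := by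
          rw [hscale, Complex.real_smul]
          have : (x : ℂ) ≠ 0 := ofReal_ne_zero.2 hx
          push_cast
          field_simp

theorem integrable_exp_mul_prod {h : ℝ → ℂ} (hint : Integrable h) (t R : ℝ) :
    Integrable (fun p : ℝ × ℝ => cexp (I * p.1 * (t - p.2 : ℝ)) * h p.2)
      ((volume.restrict (uIoc (-R) R)).prod volume) := by
  have : IsFiniteMeasure (volume.restrict (uIoc (-R) R)) := ⟨by simp [uIoc]⟩
  refine (hint.comp_snd _).bdd_mul (c := 1) (Continuous.aestronglyMeasurable (by fun_prop))
    (Eventually.of_forall fun p => ?_)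
  have hexp : I * p.1 * (t - p.2 : ℝ) = ((p.1 * (t - p.2) : ℝ) : ℂ) * I := by
    push_cast
    ring
  rw [hexp, norm_exp_ofReal_mul_I]

theorem integral_exp_mul_fourier_eq_integral_sinc {h : ℝ → ℂ} (hint : Integrable h) (t R : ℝ) :
    ∫ s in (-R)..R, cexp (I * s * t) * ∫ τ : ℝ, cexp (-I * s * τ) * h τ =
      2 * ∫ τ, (R * Real.sinc (R * (τ - t))) • h τ := by
  calc ∫ s in (-R)..R, cexp (I * s * t) * ∫ τ : ℝ, cexp (-I * s * τ) * h τ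
      = ∫ s in (-R)..R, ∫ τ : ℝ, cexp (I * s * (t - τ : ℝ)) * h τ := by
        congr with s
        rw [← integral_const_mul]
        congr with τ
        rw [← mul_assoc, ← Complex.exp_add]
        push_cast
        ring_nf
    _ = ∫ τ, (∫ s in (-R)..R, cexp (I * s * (t - τ : ℝ))) * h τ := by
        rw [intervalIntegral_integral_swap (integrable_exp_mul_prod hint t R)]
        simp_rw [intervalIntegral.integral_mul_const]
    _ = 2 * ∫ τ, (R * Real.sinc (R * (τ - t))) • h τ := by
        rw [← integral_const_mul]
        congr with τ
        rw [integral_exp_I_mul, ← Real.sinc_neg, ← mul_neg, neg_sub, Complex.real_smul, mul_assoc]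

/-- Pointwise Fourier inversion for an integrable function of bounded
variation: the symmetric (principal-value) inversion integral converges to the
average of the one-sided limits at `t`. Here `a = h(t⁻)` and `b = h(t⁺)`. -/
theorem fourier_inversion_bounded_variation_average
    (h : ℝ → ℂ) (t : ℝ) (a b : ℂ)
    (hint : Integrable h)
    (hbv : BoundedVariationOn h Set.univ)
    (hleft : Tendsto h (nhdsWithin t (Iio t)) (nhds a))
    (hright : Tendsto h (nhdsWithin t (Ioi t)) (nhds b)) :
    Tendsto
      (fun R : ℝ =>
        (1 / (2 * Real.pi) : ℂ) *
          ∫ s in (-R)..R, Complex.exp (Complex.I * s * t) *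
            ∫ τ : ℝ, Complex.exp (-Complex.I * s * τ) * h τ)
      atTop (nhds ((b + a) / 2)) := by
  obtain ⟨ν, _, ρ, hρ, hρ₀, hleftLim, hrightLim⟩ := exists_leftLim_rightLim_eq_setIntegral hint hbv
  have ha : a = ∫ v in Iio t, ρ v ∂ν := by
    rw [← hleftLim, leftLim_eq_of_tendsto hleft]
  have hb : b = -∫ v in Ioi t, ρ v ∂ν := by
    rw [← hrightLim, rightLim_eq_of_tendsto hright]
  have hae : (fun x => -∫ v in Ioi x, ρ v ∂ν) =ᵐ[volume] h := by
    simpa only [← hrightLim] using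
      rightLim_ae_eq_of_locallyBoundedVariationOn hbv.locallyBoundedVariationOn
  have hparts (R : ℝ) : ∫ x, (R * Real.sinc (R * (x - t))) • h x =
      -∫ v, sineIntegral (R * (v - t)) • ρ v ∂ν := by
    rw [← integral_sinc_smul_setIntegral_Ioi hρ hρ₀ (by simpa using (hint.congr hae.symm).neg),
      ← integral_neg]
    refine integral_congr_ae (hae.mono fun x hx => ?_)
    simp only [← hx, smul_neg]
  simp only [integral_exp_mul_fourier_eq_integral_sinc hint, hparts]
  convert ((tendsto_integral_sineIntegral_smul hρ t).neg.const_mul 2).const_mul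
    (1 / (2 * Real.pi) : ℂ) using 2
  rw [ha, hb, Complex.real_smul]
  push_cast
  field_simp
  ring
end

section
/- Let T > 0, let g₀ : [0,T] → ℂ be continuous and of bounded variation on [0,T], let t satisfy 0 < t ≤ T, and define g̃₀(s) = ∫_0^t e^{−isτ} g₀(τ) dτ for s ∈ ℝ. Parametrize the boundary ∂D⁺ of the region D⁺ = {k ∈ ℂ : Im(k²) ≥ 0, Im(k) > 0} (for the dispersion relation ω(k) = k² of the linear Schrödinger equation) by its two rays, the positive imaginary axis traversed inward and the positive real axis traversed outward. Then the boundary-term integral in the unified transform method solution formula evaluates at x = 0 as lim_{R→∞} (1/2π) [ ∫_0^R e^{ir²t}·2r·g̃₀(r²) dr + ∫_0^R e^{−ir²t}·2r·g̃₀(−r²) dr ] = g₀(t)/2. Equivalently, −(1/2π)∫_{∂D⁺} e^{−ik²t}·2k·g̃₀(−k²) dk, interpreted as the above principal-value limit after the substitution s = −k² on each ray, equals half the boundary datum g₀(t)/2. -/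
open MeasureTheory Complex Set Filter Topology

/-!
The substitutions `s = ±r²` turn the sum of the two ray integrals, truncated at `R`, into the
symmetric integral `∫ s in -R²..R², exp (i s t) g̃(s)`, the truncated Fourier inversion of
`g₀ 1_{[0,t]}` at its endpoint `t`. By Fubini this is the integral over `[0, t]` of
`2 S sinc (S (t - τ)) g₀ τ` with `S = R²`. The kernel `S sinc (S (t - τ))` concentrates at `τ = t`,
and only the left side of `t` lies in `[0, t]`, so it contributes the mass `∫_0^∞ sinc = π / 2`
rather than `π`; hence the limit `π g₀(t⁻)`, which is `g₀(t⁻) / 2` after division by `2π`.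

The kernels are not bounded in `L¹`, so the concentration is proved as in Jordan's test: for
monotone `g₀`, integration by parts against the Stieltjes measure of `g₀` replaces the kernels by
their tails, which are uniformly bounded and converge, and dominated convergence applies.
-/

section DirichletIntegral

theorem integral_exp_neg_mul_mul_sin (s x : ℝ) :
    ∫ u in (0 : ℝ)..x, Real.exp (-u * s) * Real.sin u =
      (1 - Real.exp (-x * s) * (Real.cos x + s * Real.sin x)) * (1 + s ^ 2)⁻¹ := by
  have hderiv : ∀ u ∈ uIcc 0 x, HasDerivAt
      (fun u : ℝ => -(Real.exp (-u * s) * (Real.cos u + s * Real.sin u)) * (1 + s ^ 2)⁻¹)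
      (Real.exp (-u * s) * Real.sin u) u := by
    intro u _
    have hexp : HasDerivAt (fun u : ℝ => Real.exp (-u * s)) (Real.exp (-u * s) * (-1 * s)) u :=
      ((hasDerivAt_neg u).mul_const s).exp
    have htrig : HasDerivAt (fun u : ℝ => Real.cos u + s * Real.sin u)
        (-Real.sin u + s * Real.cos u) u :=
      (Real.hasDerivAt_cos u).add ((Real.hasDerivAt_sin u).const_mul s)
    refine ((hexp.mul htrig).neg.mul_const (1 + s ^ 2)⁻¹).congr_deriv ?_
    field_simp
    ring
  rw [intervalIntegral.integral_eq_sub_of_hasDerivAt hderiv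
    (Continuous.intervalIntegrable (by fun_prop) _ _)]
  simp only [neg_zero, zero_mul, Real.exp_zero, Real.cos_zero, Real.sin_zero]
  ring

theorem integral_Ioi_exp_neg_mul {u : ℝ} (hu : 0 < u) :
    ∫ s in Ioi (0 : ℝ), Real.exp (-u * s) = u⁻¹ := by
  rw [integral_exp_mul_Ioi (neg_lt_zero.2 hu), mul_zero, Real.exp_zero, div_neg, neg_div, neg_neg,
    one_div]

theorem integrable_exp_neg_mul_mul_sin (x : ℝ) :
    Integrable (Function.uncurry fun u s : ℝ => Real.exp (-u * s) * Real.sin u)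
      ((volume.restrict (Ioc 0 x)).prod (volume.restrict (Ioi 0))) := by
  refine (integrable_prod_iff (Continuous.aestronglyMeasurable (by fun_prop))).2 ⟨?_, ?_⟩
  · filter_upwards [ae_restrict_mem measurableSet_Ioc] with u hu
    exact (integrableOn_exp_mul_Ioi (neg_lt_zero.2 hu.1) 0).mul_const (Real.sin u)
  · have hsinc : IntegrableOn (fun u => |Real.sinc u|) (Ioc 0 x) :=
      Real.continuous_sinc.abs.integrableOn_Ioc
    refine hsinc.congr_fun (fun u hu => ?_) measurableSet_Ioc
    simp only [Function.uncurry, norm_mul, Real.norm_eq_abs, Real.abs_exp]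
    rw [integral_mul_const, integral_Ioi_exp_neg_mul hu.1, Real.sinc_of_ne_zero hu.1.ne', abs_div,
      abs_of_pos hu.1, inv_mul_eq_div]

theorem integral_sinc_eq_integral_Ioi {x : ℝ} (hx : 0 ≤ x) :
    ∫ u in (0 : ℝ)..x, Real.sinc u =
      ∫ s in Ioi (0 : ℝ),
        (1 - Real.exp (-x * s) * (Real.cos x + s * Real.sin x)) * (1 + s ^ 2)⁻¹ := by
  simp_rw [← integral_exp_neg_mul_mul_sin, intervalIntegral.integral_of_le hx]
  rw [← integral_integral_swap (integrable_exp_neg_mul_mul_sin x)]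
  refine setIntegral_congr_fun measurableSet_Ioc fun u hu => ?_
  rw [integral_mul_const, integral_Ioi_exp_neg_mul hu.1, Real.sinc_of_ne_zero hu.1.ne',
    inv_mul_eq_div]

theorem abs_cos_add_mul_sin_le (s x : ℝ) : |Real.cos x + s * Real.sin x| ≤ 1 + s ^ 2 := by
  have hCauchySchwarz : (Real.cos x + s * Real.sin x) ^ 2 ≤ 1 + s ^ 2 := by
    nlinarith [sq_nonneg (Real.sin x - s * Real.cos x), Real.sin_sq_add_cos_sq x]
  exact abs_le_of_sq_le_sq (by nlinarith [sq_nonneg s]) (by positivity)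

theorem abs_integral_sinc_sub_pi_div_two_le {x : ℝ} (hx : 0 < x) :
    |(∫ u in (0 : ℝ)..x, Real.sinc u) - Real.pi / 2| ≤ x⁻¹ := by
  set ρ : ℝ → ℝ := fun s =>
    Real.exp (-x * s) * (Real.cos x + s * Real.sin x) * (1 + s ^ 2)⁻¹ with hρ
  have hρ_le : ∀ s, ‖ρ s‖ ≤ Real.exp (-x * s) := fun s => by
    have hs : 0 < 1 + s ^ 2 := by positivity
    simp only [hρ]
    rw [mul_assoc, norm_mul, Real.norm_of_nonneg (Real.exp_pos _).le, ← div_eq_mul_inv,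
      norm_div, Real.norm_of_nonneg hs.le]
    exact mul_le_of_le_one_right (Real.exp_pos _).le
      ((div_le_one hs).2 (abs_cos_add_mul_sin_le s x))
  have hexp : IntegrableOn (fun s => Real.exp (-x * s)) (Ioi 0) :=
    integrableOn_exp_mul_Ioi (neg_lt_zero.2 hx) 0
  have hρ_int : IntegrableOn ρ (Ioi 0) :=
    hexp.mono' (Measurable.aestronglyMeasurable (by fun_prop)) (.of_forall hρ_le)
  have hremainder : (∫ u in (0 : ℝ)..x, Real.sinc u) - Real.pi / 2 = -∫ s in Ioi (0 : ℝ), ρ s := by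
    simp_rw [integral_sinc_eq_integral_Ioi hx.le, sub_mul, one_mul]
    rw [integral_sub integrable_inv_one_add_sq.integrableOn hρ_int, integral_Ioi_inv_one_add_sq,
      Real.arctan_zero]
    ring
  rw [hremainder, abs_neg, ← integral_Ioi_exp_neg_mul hx]
  exact norm_integral_le_of_norm_le hexp (.of_forall hρ_le)

theorem tendsto_integral_sinc_atTop :
    Tendsto (fun x : ℝ => ∫ u in (0 : ℝ)..x, Real.sinc u) atTop (𝓝 (Real.pi / 2)) := by
  rw [tendsto_iff_norm_sub_tendsto_zero]
  refine squeeze_zero' (.of_forall fun _ => norm_nonneg _) ?_ tendsto_inv_atTop_zero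
  filter_upwards [eventually_gt_atTop 0] with x hx
  exact abs_integral_sinc_sub_pi_div_two_le hx

theorem abs_integral_sinc_le {x : ℝ} (hx : 0 ≤ x) :
    |∫ u in (0 : ℝ)..x, Real.sinc u| ≤ Real.pi / 2 + 1 := by
  rcases le_total x 1 with hx1 | hx1
  · have hbound : ‖∫ u in (0 : ℝ)..x, Real.sinc u‖ ≤ 1 * |x - 0| :=
      intervalIntegral.norm_integral_le_of_norm_le_const fun u _ => Real.abs_sinc_le_one u
    rw [Real.norm_eq_abs, one_mul, sub_zero, abs_of_nonneg hx] at hbound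
    linarith [Real.pi_pos]
  · have hdist := abs_integral_sinc_sub_pi_div_two_le (one_pos.trans_le hx1)
    have hinv : x⁻¹ ≤ 1 := inv_le_one_of_one_le₀ hx1
    rw [abs_le] at hdist ⊢
    constructor <;> linarith [Real.pi_pos]

end DirichletIntegral

section JordanKernel

variable {a b : ℝ}

instance isFiniteMeasure_restrict_Ioc_stieltjesFunction (f : StieltjesFunction ℝ) (a b : ℝ) :
    IsFiniteMeasure (f.measure.restrict (Ioc a b)) :=
  ⟨by simp only [Measure.restrict_apply_univ, f.measure_Ioc, ENNReal.ofReal_lt_top]⟩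

theorem intervalIntegral_mul_stieltjesFunction (f : StieltjesFunction ℝ) {k : ℝ → ℝ} (hab : a ≤ b)
    (hk : IntervalIntegrable k volume a b) :
    ∫ u in a..b, k u * (f u - f a) = ∫ v in Ioc a b, (∫ u in v..b, k u) ∂f.measure := by
  set F : ℝ → ℝ → ℝ := fun u v => (Iic u).indicator (fun _ => k u) v with hF
  have hF_eq : ∀ v, (fun u => F u v) = (Ici v).indicator k := fun v => rfl
  have hintegrable : Integrable (Function.uncurry F)
      ((volume.restrict (Ioc a b)).prod (f.measure.restrict (Ioc a b))) :=
    (((intervalIntegrable_iff_integrableOn_Ioc_of_le hab).1 hk).comp_fst _).indicator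
      (measurableSet_le measurable_snd measurable_fst)
  have hinner : ∀ u ∈ Ioc a b, k u * (f u - f a) = ∫ v in Ioc a b, F u v ∂f.measure := by
    intro u hu
    rw [hF, setIntegral_indicator measurableSet_Iic, setIntegral_const, Ioc_inter_Iic,
      min_eq_right hu.2, measureReal_def, f.measure_Ioc,
      ENNReal.toReal_ofReal (sub_nonneg.2 (f.mono hu.1.le)), smul_eq_mul, mul_comm]
  have houter : ∀ v ∈ Ioc a b, ∫ u in Ioc a b, F u v = ∫ u in v..b, k u := by
    intro v hv
    have hinter : Ioc a b ∩ Ici v = Icc v b := by grind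
    rw [hF_eq, setIntegral_indicator measurableSet_Ici, hinter, integral_Icc_eq_integral_Ioc,
      intervalIntegral.integral_of_le hv.2]
  rw [intervalIntegral.integral_of_le hab, setIntegral_congr_fun measurableSet_Ioc hinner,
    integral_integral_swap hintegrable, setIntegral_congr_fun measurableSet_Ioc houter]

/-- A family of kernels on `[a, b]` concentrating at the right endpoint `b` with mass `L`, in the
weak sense of Jordan's convergence test: the tails `∫_v^b k i` are bounded uniformly in `v` and
eventually in `i`, and they tend to `L` for each `v < b`. Unlike for an approximate identity, the
`L¹` norms of the kernels may be unbounded. -/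
structure IsJordanKernel {ι : Type*} (k : ι → ℝ → ℝ) (l : Filter ι) (a b L : ℝ) : Prop where
  continuousOn : ∀ i, ContinuousOn (k i) (uIcc a b)
  exists_abs_integral_le : ∃ C, ∀ᶠ i in l, ∀ v ∈ Icc a b, |∫ u in v..b, k i u| ≤ C
  tendsto_integral : ∀ v ∈ Ico a b, Tendsto (fun i => ∫ u in v..b, k i u) l (𝓝 L)

variable {ι : Type*} {k : ι → ℝ → ℝ} {l : Filter ι} {L : ℝ}

namespace IsJordanKernel

theorem tendsto_setIntegral_stieltjesFunction [l.IsCountablyGenerated]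
    (hk : IsJordanKernel k l a b L) (f : StieltjesFunction ℝ) (hab : a < b) :
    Tendsto (fun i => ∫ v in Ioc a b, (∫ u in v..b, k i u) ∂f.measure) l
      (𝓝 (L * (Function.leftLim f b - f a))) := by
  obtain ⟨C, hC⟩ := hk.exists_abs_integral_le
  have hlim : ∫ v in Ioc a b, (Iio b).indicator (fun _ => L) v ∂f.measure =
      L * (Function.leftLim f b - f a) := by
    have hinter : Ioc a b ∩ Iio b = Ioo a b := by grind
    rw [setIntegral_indicator measurableSet_Iio, hinter, setIntegral_const, measureReal_def,
      f.measure_Ioo, ENNReal.toReal_ofReal (sub_nonneg.2 (f.mono.le_leftLim hab)), smul_eq_mul,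
      mul_comm]
  rw [← hlim]
  refine tendsto_integral_filter_of_dominated_convergence (fun _ => C) ?_ ?_
    (integrable_const C) ?_
  · refine .of_forall fun i => ContinuousOn.aestronglyMeasurable ?_ measurableSet_Ioc
    have hcont := intervalIntegral.continuousOn_primitive_interval_left
      ((hk.continuousOn i).integrableOn_uIcc (μ := volume))
    exact hcont.mono (Ioc_subset_Icc_self.trans Icc_subset_uIcc)
  · filter_upwards [hC] with i hi
    filter_upwards [ae_restrict_mem measurableSet_Ioc] with v hv
    exact hi v (Ioc_subset_Icc_self hv)
  · filter_upwards [ae_restrict_mem measurableSet_Ioc] with v hv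
    rcases hv.2.lt_or_eq with hvb | rfl
    · rw [indicator_of_mem (mem_Iio.2 hvb)]
      exact hk.tendsto_integral v ⟨hv.1.le, hvb⟩
    · simp only [intervalIntegral.integral_same, mem_Iio, lt_irrefl, not_false_eq_true,
        indicator_of_notMem]
      exact tendsto_const_nhds

theorem tendsto_integral_mul_stieltjesFunction [l.IsCountablyGenerated]
    (hk : IsJordanKernel k l a b L) (f : StieltjesFunction ℝ) (hab : a < b) :
    Tendsto (fun i => ∫ u in a..b, k i u * f u) l (𝓝 (L * Function.leftLim f b)) := by
  have hsplit : ∀ i, ∫ u in a..b, k i u * f u =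
      (∫ u in a..b, k i u) * f a + ∫ v in Ioc a b, (∫ u in v..b, k i u) ∂f.measure := by
    intro i
    have hk_int : IntervalIntegrable (k i) volume a b := (hk.continuousOn i).intervalIntegrable
    rw [← intervalIntegral_mul_stieltjesFunction f hab.le hk_int,
      ← intervalIntegral.integral_mul_const, ← intervalIntegral.integral_add (hk_int.mul_const _)
        ((f.mono.intervalIntegrable.sub intervalIntegrable_const).continuousOn_mul
          (hk.continuousOn i))]
    simp only [mul_sub, add_sub_cancel]
  have hlim := ((hk.tendsto_integral a ⟨le_rfl, hab⟩).mul_const (f a)).add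
    (hk.tendsto_setIntegral_stieltjesFunction f hab)
  rw [← mul_add, add_sub_cancel] at hlim
  exact hlim.congr fun i => (hsplit i).symm

theorem tendsto_integral_mul_monotone [l.IsCountablyGenerated] (hk : IsJordanKernel k l a b L)
    {h : ℝ → ℝ} (hh : Monotone h) (hab : a < b) :
    Tendsto (fun i => ∫ u in a..b, k i u * h u) l (𝓝 (L * Function.leftLim h b)) := by
  have hlim := hk.tendsto_integral_mul_stieltjesFunction hh.stieltjesFunction hab
  have hleft : Function.leftLim hh.stieltjesFunction b = Function.leftLim h b :=
    leftLim_rightLim (hh.tendsto_leftLim b)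
  rw [hleft] at hlim
  refine hlim.congr fun i => intervalIntegral.integral_congr_ae ?_
  filter_upwards [hh.countable_not_continuousAt.ae_notMem volume] with u hu _
  rw [hh.stieltjesFunction_eq, (not_not.1 hu).continuousWithinAt.rightLim_eq]

end IsJordanKernel

theorem exists_monotone_sub_monotone_eqOn_Icc {h : ℝ → ℝ} (hab : a ≤ b)
    (hh : BoundedVariationOn h (Icc a b)) :
    ∃ p q : ℝ → ℝ, Monotone p ∧ Monotone q ∧ EqOn h (p - q) (Icc a b) := by
  have hextend : ∀ {r : ℝ → ℝ}, MonotoneOn r (Icc a b) →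
      ∃ r' : ℝ → ℝ, Monotone r' ∧ EqOn r r' (Icc a b) := fun hr =>
    hr.exists_monotone_extension
      (hr.map_bddBelow Subset.rfl ⟨a, fun _ hx => hx.1, left_mem_Icc.2 hab⟩)
      (hr.map_bddAbove Subset.rfl ⟨b, fun _ hx => hx.2, right_mem_Icc.2 hab⟩)
  obtain ⟨p, q, hp, hq, rfl⟩ := hh.locallyBoundedVariationOn.exists_monotoneOn_sub_monotoneOn
  obtain ⟨p', hp', hpp'⟩ := hextend hp
  obtain ⟨q', hq', hqq'⟩ := hextend hq
  exact ⟨p', q', hp', hq', fun u hu => congrArg₂ (· - ·) (hpp' hu) (hqq' hu)⟩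

theorem intervalIntegrable_of_boundedVariationOn_real {h : ℝ → ℝ}
    (hh : BoundedVariationOn h (uIcc a b)) : IntervalIntegrable h volume a b := by
  obtain ⟨p, q, hp, hq, rfl⟩ := hh.locallyBoundedVariationOn.exists_monotoneOn_sub_monotoneOn
  exact hp.intervalIntegrable.sub hq.intervalIntegrable

theorem IsJordanKernel.tendsto_integral_mul_boundedVariationOn [l.IsCountablyGenerated]
    (hk : IsJordanKernel k l a b L) {h : ℝ → ℝ} {c : ℝ} (hab : a < b)
    (hh : BoundedVariationOn h (Icc a b)) (hc : Tendsto h (𝓝[<] b) (𝓝 c)) :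
    Tendsto (fun i => ∫ u in a..b, k i u * h u) l (𝓝 (L * c)) := by
  obtain ⟨p, q, hp, hq, hpq⟩ := exists_monotone_sub_monotone_eqOn_Icc hab.le hh
  have hc_eq : c = Function.leftLim p b - Function.leftLim q b := by
    refine tendsto_nhds_unique hc
      (((hp.tendsto_leftLim b).sub (hq.tendsto_leftLim b)).congr' ?_)
    filter_upwards [Ioo_mem_nhdsLT hab] with u hu
    exact (hpq (Ioo_subset_Icc_self hu)).symm
  rw [hc_eq, mul_sub]
  refine ((hk.tendsto_integral_mul_monotone hp hab).sub
    (hk.tendsto_integral_mul_monotone hq hab)).congr fun i => ?_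
  rw [← intervalIntegral.integral_sub
    (hp.intervalIntegrable.continuousOn_mul (hk.continuousOn i))
    (hq.intervalIntegrable.continuousOn_mul (hk.continuousOn i))]
  refine intervalIntegral.integral_congr fun u hu => ?_
  rw [uIcc_of_le hab.le] at hu
  simp only [hpq hu, Pi.sub_apply, mul_sub]

section FiniteDimensional

variable {E : Type*} [NormedAddCommGroup E] [NormedSpace ℝ E] [FiniteDimensional ℝ E]

theorem intervalIntegrable_of_boundedVariationOn {h : ℝ → E}
    (hh : BoundedVariationOn h (uIcc a b)) : IntervalIntegrable h volume a b := by
  let B := Module.finBasis ℝ E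
  have hcoord : ∀ j, IntervalIntegrable (fun u => B.coord j (h u)) volume a b := fun j =>
    intervalIntegrable_of_boundedVariationOn_real
      ((B.coord j).toContinuousLinearMap.lipschitz.comp_boundedVariationOn hh)
  have hsum : h = ∑ j, fun u => B.coord j (h u) • B j := by
    ext u
    rw [Finset.sum_apply]
    exact (B.sum_repr (h u)).symm
  rw [hsum]
  exact IntervalIntegrable.sum _ fun j _ => (hcoord j).smul_continuousOn continuousOn_const

theorem IsJordanKernel.tendsto_integral_smul_boundedVariationOn [l.IsCountablyGenerated]
    (hk : IsJordanKernel k l a b L) {h : ℝ → E} {c : E} (hab : a < b)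
    (hh : BoundedVariationOn h (Icc a b)) (hc : Tendsto h (𝓝[<] b) (𝓝 c)) :
    Tendsto (fun i => ∫ u in a..b, k i u • h u) l (𝓝 (L • c)) := by
  let B := Module.finBasis ℝ E
  have hcoord_bv : ∀ j, BoundedVariationOn (fun u => B.coord j (h u)) (Icc a b) := fun j =>
    (B.coord j).toContinuousLinearMap.lipschitz.comp_boundedVariationOn hh
  have hcoord_lim : ∀ j, Tendsto (fun u => B.coord j (h u)) (𝓝[<] b) (𝓝 (B.coord j c)) := fun j =>
    ((B.coord j).continuous_of_finiteDimensional.tendsto c).comp hc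
  have hintegral : ∀ i, ∫ u in a..b, k i u • h u =
      ∑ j, (∫ u in a..b, k i u * B.coord j (h u)) • B j := by
    intro i
    have hcoord : ∀ j, IntervalIntegrable (fun u => k i u * B.coord j (h u)) volume a b := fun j =>
      (intervalIntegrable_of_boundedVariationOn_real
        (uIcc_of_le hab.le ▸ hcoord_bv j)).continuousOn_mul (hk.continuousOn i)
    simp_rw [← intervalIntegral.integral_smul_const]
    rw [← intervalIntegral.integral_finsetSum fun j _ =>
      (hcoord j).smul_continuousOn continuousOn_const]
    refine intervalIntegral.integral_congr fun u _ => ?_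
    simp only [mul_smul, ← Finset.smul_sum, Module.Basis.coord_apply, B.sum_repr]
  have hlim : L • c = ∑ j, (L * B.coord j c) • B j := by
    simp only [mul_smul, ← Finset.smul_sum, Module.Basis.coord_apply, B.sum_repr]
  simp only [hintegral, hlim]
  exact tendsto_finsetSum _ fun j _ =>
    (hk.tendsto_integral_mul_boundedVariationOn hab (hcoord_bv j) (hcoord_lim j)).smul_const (B j)

end FiniteDimensional

theorem isJordanKernel_sinc (a b : ℝ) :
    IsJordanKernel (fun S u => S * Real.sinc (S * (b - u))) atTop a b (Real.pi / 2) := by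
  have hintegral : ∀ S v : ℝ, ∫ u in v..b, S * Real.sinc (S * (b - u)) =
      ∫ u in (0 : ℝ)..S * (b - v), Real.sinc u := by
    intro S v
    rw [intervalIntegral.integral_const_mul,
      intervalIntegral.integral_comp_sub_left (fun u => Real.sinc (S * u)),
      intervalIntegral.mul_integral_comp_mul_left, sub_self, mul_zero]
  refine ⟨fun S => ?_, ⟨Real.pi / 2 + 1, ?_⟩, fun v hv => ?_⟩
  · fun_prop
  · filter_upwards [eventually_ge_atTop 0] with S hS v hv
    rw [hintegral]
    exact abs_integral_sinc_le (mul_nonneg hS (sub_nonneg.2 hv.2))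
  · simp only [hintegral]
    exact tendsto_integral_sinc_atTop.comp (tendsto_id.atTop_mul_const (sub_pos.2 hv.2))

end JordanKernel

section SquareSubstitution

variable {E : Type*} [NormedAddCommGroup E] [NormedSpace ℝ E] {F : ℝ → E}

theorem integral_two_mul_smul_comp_sq (hF : Continuous F) (R : ℝ) :
    ∫ r in (0 : ℝ)..R, (2 * r) • F (r ^ 2) = ∫ s in (0 : ℝ)..R ^ 2, F s := by
  have hsubst := intervalIntegral.integral_deriv_smul_comp (a := 0) (b := R)
    (f := fun r : ℝ => r ^ 2) (f' := fun r => 2 * r) (g := F)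
    (fun r _ => by simpa using hasDerivAt_pow 2 r) (by fun_prop) hF
  rwa [zero_pow two_ne_zero] at hsubst

theorem integral_two_mul_smul_comp_sq_add_comp_neg_sq (hF : Continuous F) (R : ℝ) :
    (∫ r in (0 : ℝ)..R, (2 * r) • F (r ^ 2)) + ∫ r in (0 : ℝ)..R, (2 * r) • F (-r ^ 2) =
      ∫ s in -R ^ 2..R ^ 2, F s := by
  rw [integral_two_mul_smul_comp_sq hF,
    integral_two_mul_smul_comp_sq (F := fun s => F (-s)) (hF.comp continuous_neg),
    intervalIntegral.integral_comp_neg, neg_zero, add_comm,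
    intervalIntegral.integral_add_adjacent_intervals (hF.intervalIntegrable _ _)
      (hF.intervalIntegrable _ _)]

end SquareSubstitution

section TimeTransform

variable {g : ℝ → ℂ} {a b : ℝ}

/-- The time transform `g̃(s) = ∫_a^b e^{-isτ} g(τ) dτ` of a function `g` on `[a, b]`. -/
noncomputable def timeTransform (g : ℝ → ℂ) (a b s : ℝ) : ℂ :=
  ∫ τ in a..b, exp (-I * s * τ) * g τ

theorem continuous_timeTransform (hg : IntervalIntegrable g volume a b) :
    Continuous (timeTransform g a b) := by
  refine intervalIntegral.continuous_of_dominated_interval (bound := fun τ => ‖g τ‖)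
    (fun s => ?_) (fun s => ?_) hg.norm (.of_forall fun τ _ => by fun_prop)
  · exact (Continuous.aestronglyMeasurable (by fun_prop)).mul hg.def'.aestronglyMeasurable
  · refine .of_forall fun τ _ => ?_
    rw [norm_mul, norm_exp]
    simp

theorem integral_exp_I_mul_mul_symm (S y : ℝ) :
    ∫ s in -S..S, exp (I * s * y) = (2 * (S * Real.sinc (S * y)) : ℝ) := by
  rcases eq_or_ne y 0 with rfl | hy
  · simp [two_mul]
  · have hscale := intervalIntegral.integral_comp_mul_right (a := -S) (b := S)
      (fun x : ℝ => exp (x * I)) hy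
    rw [neg_mul, integral_exp_mul_I_eq_sinc] at hscale
    calc ∫ s in -S..S, exp (I * s * y) = ∫ s in -S..S, exp ((s * y : ℝ) * I) :=
        intervalIntegral.integral_congr fun s _ => by
          push_cast
          ring_nf
      _ = (2 * (S * Real.sinc (S * y)) : ℝ) := by
        rw [hscale, real_smul]
        push_cast
        have hy_complex : (y : ℂ) ≠ 0 := ofReal_ne_zero.2 hy
        field_simp

theorem integral_exp_mul_timeTransform (hg : IntervalIntegrable g volume a b) (S x : ℝ) :
    ∫ s in -S..S, exp (I * s * x) * timeTransform g a b s =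
      (2 : ℝ) • ∫ τ in a..b, (S * Real.sinc (S * (x - τ))) • g τ := by
  have hintegrable : IntegrableOn (fun p : ℝ × ℝ => exp (I * p.1 * (x - p.2)) * g p.2)
      (uIoc (-S) S ×ˢ uIoc a b) := by
    have : IsFiniteMeasure (volume.restrict (uIoc (-S) S)) := Real.isFiniteMeasure_restrict_Ioc _ _
    rw [IntegrableOn, Measure.volume_eq_prod, ← Measure.prod_restrict]
    refine (hg.def'.comp_snd _).bdd_mul (c := 1) (Continuous.aestronglyMeasurable (by fun_prop))
      (.of_forall fun p => ?_)
    simp [norm_exp]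
  calc ∫ s in -S..S, exp (I * s * x) * timeTransform g a b s
      = ∫ s in -S..S, ∫ τ in a..b, exp (I * s * (x - τ)) * g τ := by
        refine intervalIntegral.integral_congr fun s _ => ?_
        simp only [timeTransform, ← intervalIntegral.integral_const_mul, ← mul_assoc, ← exp_add]
        ring_nf
    _ = ∫ τ in a..b, ∫ s in -S..S, exp (I * s * (x - τ)) * g τ :=
        intervalIntegral_intervalIntegral_swap hintegrable
    _ = (2 : ℝ) • ∫ τ in a..b, (S * Real.sinc (S * (x - τ))) • g τ := by
        rw [← intervalIntegral.integral_smul]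
        refine intervalIntegral.integral_congr fun τ _ => ?_
        simp only [intervalIntegral.integral_mul_const, ← ofReal_sub]
        rw [integral_exp_I_mul_mul_symm, smul_smul, real_smul]

theorem tendsto_integral_exp_mul_timeTransform (hab : a < b) (hg : BoundedVariationOn g (Icc a b))
    {c : ℂ} (hc : Tendsto g (𝓝[<] b) (𝓝 c)) :
    Tendsto (fun S : ℝ => ∫ s in -S..S, exp (I * s * b) * timeTransform g a b s) atTop
      (𝓝 (Real.pi * c)) := by
  have hlim := ((isJordanKernel_sinc a b).tendsto_integral_smul_boundedVariationOn hab hg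
    hc).const_smul (2 : ℝ)
  rw [smul_smul, mul_div_cancel₀ _ two_ne_zero, real_smul] at hlim
  exact hlim.congr fun S => (integral_exp_mul_timeTransform
    (intervalIntegrable_of_boundedVariationOn (uIcc_of_le hab.le ▸ hg)) S b).symm

theorem integral_rays_timeTransform (hg : IntervalIntegrable g volume a b) (R x : ℝ) :
    (∫ r in (0 : ℝ)..R, exp (I * r ^ 2 * x) * (2 * r) * timeTransform g a b (r ^ 2)) +
      ∫ r in (0 : ℝ)..R, exp (-I * r ^ 2 * x) * (2 * r) * timeTransform g a b (-(r ^ 2)) =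
      ∫ s in -R ^ 2..R ^ 2, exp (I * s * x) * timeTransform g a b s := by
  have hcont : Continuous fun s : ℝ => exp (I * s * x) * timeTransform g a b s :=
    Continuous.mul (by fun_prop) (continuous_timeTransform hg)
  rw [← integral_two_mul_smul_comp_sq_add_comp_neg_sq hcont]
  congr 1 <;> refine intervalIntegral.integral_congr fun r _ => ?_
  all_goals
    rw [real_smul]
    push_cast
    ring_nf

end TimeTransform

theorem UTM_boundary_term_linear_schrodinger_general
    (g₀ : ℝ → ℂ) (t : ℝ) (ht0 : 0 < t)
    (hbv : BoundedVariationOn g₀ (Set.Icc 0 t))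
    (L : ℂ) (hleft : Tendsto g₀ (𝓝[<] t) (𝓝 L))
    (gt : ℝ → ℂ)
    (hgt : ∀ s : ℝ, gt s = ∫ τ in (0 : ℝ)..t, Complex.exp (-Complex.I * s * τ) * g₀ τ) :
    Tendsto
      (fun R : ℝ =>
        (1 / (2 * Real.pi) : ℂ) *
          ((∫ r in (0 : ℝ)..R, Complex.exp (Complex.I * r ^ 2 * t) * (2 * r) * gt (r ^ 2))
            + ∫ r in (0 : ℝ)..R,
                Complex.exp (-Complex.I * r ^ 2 * t) * (2 * r) * gt (-(r ^ 2))))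
      atTop (nhds (L / 2)) := by
  obtain rfl : gt = timeTransform g₀ 0 t := funext hgt
  have hg := intervalIntegrable_of_boundedVariationOn (uIcc_of_le ht0.le ▸ hbv)
  have hlim := ((tendsto_integral_exp_mul_timeTransform ht0 hbv hleft).comp
    (tendsto_pow_atTop two_ne_zero)).const_mul (1 / (2 * Real.pi) : ℂ)
  have hpi : (Real.pi : ℂ) ≠ 0 := ofReal_ne_zero.2 Real.pi_ne_zero
  rw [show 1 / (2 * Real.pi) * (Real.pi * L) = L / 2 by field_simp] at hlim
  refine hlim.congr fun R => ?_
  rw [Function.comp_apply, integral_rays_timeTransform hg]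

/-- Evaluation at `x = 0` of the boundary-term integral over `∂D⁺`
(for the linear Schrödinger dispersion relation `ω(k) = k²`, with
`D⁺ = {k : Im(k²) ≥ 0, Im k > 0}`) in the unified transform method solution formula.
Parametrizing the two rays of `∂D⁺` (the positive imaginary axis traversed inward and
the positive real axis traversed outward) and substituting `s = −k²` on each ray, the
principal-value limit of the boundary term equals half the boundary datum, `g₀(t)/2`.
Here `gt` is the time transform of `g₀` truncated at the evaluation time `t`. -/
theorem UTM_boundary_term_linear_schrodinger
    (T : ℝ) (hT : 0 < T) (g₀ : ℝ → ℂ)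
    (hcont : ContinuousOn g₀ (Set.Icc 0 T))
    (hbv : BoundedVariationOn g₀ (Set.Icc 0 T))
    (t : ℝ) (ht0 : 0 < t) (htT : t ≤ T)
    (gt : ℝ → ℂ)
    (hgt : ∀ s : ℝ, gt s = ∫ τ in (0 : ℝ)..t, Complex.exp (-Complex.I * s * τ) * g₀ τ) :
    Tendsto
      (fun R : ℝ =>
        (1 / (2 * Real.pi) : ℂ) *
          ((∫ r in (0 : ℝ)..R, Complex.exp (Complex.I * r ^ 2 * t) * (2 * r) * gt (r ^ 2))
            + ∫ r in (0 : ℝ)..R,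
                Complex.exp (-Complex.I * r ^ 2 * t) * (2 * r) * gt (-(r ^ 2))))
      atTop (nhds (g₀ t / 2)) := by
  have hleft := (hcont t ⟨ht0.le, htT⟩).mono_of_mem_nhdsWithin (Icc_mem_nhdsLT_of_mem ⟨ht0, htT⟩)
  exact UTM_boundary_term_linear_schrodinger_general g₀ t ht0
    (hbv.mono (Icc_subset_Icc_right htT)) (g₀ t) hleft gt hgt
end
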